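/- arXiv:1611.07414 — 3 statements merged into one kernel-verified Lean document; each statement's English description precedes it below -/
import Mathlib

section
/- Fix an integer K ≥ 2. Consider the following restricted-assignment max-min instance. Machines: 'large' machines M_1,…,M_K each with demand K, and 'small' machines m^{(i)}_k for i,k ∈ {1,…,K} each with demand 1. Jobs: K−1 'big' jobs each of capacity K, each of which may only be assigned to a large machine; for each i ∈ {1,…,K}, one 'public' job j^{(i)}_0 of capacity 1 which may only be assigned to one of m^{(i)}_1,…,m^{(i)}_K; and for each i,k ∈ {1,…,K}, one 'private' job j^{(i)}_k of capacity 1 which may only be assigned to m^{(i)}_k or to M_i. Then for every assignment of each job to one of its allowed machines, some machine receives total capacity at most 1/K times its demand; that is, either some large machine receives total capacity at most 1, or some small machine receives no job at all. -/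
open Finset

/-- The Bansal–Sviridenko integrality-gap instance for restricted-assignment max-min
allocation, with parameter `K ≥ 2`. There are `K` large machines `M_1, …, M_K` of demand
`K` and `K·K` small machines `m⁽ⁱ⁾ₖ` of demand `1`; there are `K−1` big jobs of capacity
`K` (assignable only to large machines, via `Abig`), one public job `j⁽ⁱ⁾₀` of capacity `1`
per class `i` (assignable only to the small machines of class `i`, via `Apub`), and one
private job `j⁽ⁱ⁾ₖ` of capacity `1` per pair `(i,k)` (assignable only to `m⁽ⁱ⁾ₖ` or to
`M_i`; `Apriv i k = true` means it goes to the small machine `m⁽ⁱ⁾ₖ`, and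
`Apriv i k = false` means it goes to the large machine `M_i`). For every such assignment,
either some large machine receives total capacity at most `1` (i.e. `1/K` of its demand),
or some small machine receives no job at all. -/
theorem bansal_sviridenko_gap (K : ℕ) (hK : 2 ≤ K)
    (Abig : Fin (K - 1) → Fin K)
    (Apub : Fin K → Fin K)
    (Apriv : Fin K → Fin K → Bool) :
    (∃ i : Fin K,
      K * (Finset.univ.filter (fun b => Abig b = i)).card
        + (Finset.univ.filter (fun k => Apriv i k = false)).card ≤ 1) ∨
    (∃ i k : Fin K, Apriv i k = false ∧ Apub i ≠ k) := by
  by_contra! h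
  obtain ⟨hlarge, hsmall⟩ := h
  obtain ⟨i, hi⟩ : ∃ i, ∀ b, Abig b ≠ i := by
    by_contra! hsurj
    have hcard := Fintype.card_le_of_surjective Abig hsurj
    simp only [Fintype.card_fin] at hcard
    omega
  have hbig : (Finset.univ.filter (fun b => Abig b = i)).card = 0 := by
    simp [hi]
  have hpriv : (Finset.univ.filter (fun k => Apriv i k = false)).card ≤ 1 := by
    refine (Finset.card_le_card (t := {Apub i}) fun k hk => ?_).trans_eq (card_singleton _)
    rw [Finset.mem_filter] at hk
    exact Finset.mem_singleton.2 (hsmall i k hk.2).symm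
  have hload := hlarge i
  rw [hbig] at hload
  omega
end

section
/- Let S be a finite set of jobs with capacities c : S → ℝ_{>0}, let D > 0, let f be a positive integer, and let ε_1, ε_2 ≥ 0. Suppose |S| ≤ (1+ε_2)·f and Σ_{j∈S} c(j) ≥ (1−ε_1)·D. Then there exists a subset S' ⊆ S with |S'| ≤ f and Σ_{j∈S'} c(j) ≥ (1 − 2ε_1 − ε_2)·D. -/
open Finset

/-- Some `k`-element subset of `S` has average value at least the average over `S`. -/
theorem exists_subset_card_eq_mul_sum_le {α : Type*} [DecidableEq α] (c : α → ℝ) {k : ℕ}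
    (hk : 0 < k) (S : Finset α) (hkS : k ≤ S.card) :
    ∃ T ⊆ S, T.card = k ∧ (k : ℝ) * ∑ j ∈ S, c j ≤ S.card * ∑ j ∈ T, c j := by
  induction S using Finset.strongInduction with
  | H S ih =>
    rcases hkS.eq_or_lt with h | h
    · exact ⟨S, Subset.rfl, h.symm, by rw [← h]⟩
    · obtain ⟨m, hm, hmin⟩ := S.exists_min_image c (card_pos.mp (by omega))
      have hcard : (S.erase m).card + 1 = S.card := card_erase_add_one hm
      obtain ⟨T, hTS, hT, hle⟩ := ih _ (erase_ssubset hm) (by omega)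
      refine ⟨T, hTS.trans (erase_subset _ _), hT, ?_⟩
      have hsum : ∑ j ∈ S.erase m, c j + c m = ∑ j ∈ S, c j := sum_erase_add _ _ hm
      have hminsum : ((S.erase m).card : ℝ) * c m ≤ ∑ j ∈ S.erase m, c j := by
        simpa using card_nsmul_le_sum (S.erase m) c (c m)
          fun j hj => hmin j (mem_of_mem_erase hj)
      have hpos : (0 : ℝ) < (S.erase m).card := by
        exact_mod_cast (by omega : 0 < (S.erase m).card)
      have hk' : (0 : ℝ) ≤ k := k.cast_nonneg
      rw [← hsum, ← hcard]
      push_cast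
      refine le_of_mul_le_mul_left ?_ hpos
      have h₁ := mul_le_mul_of_nonneg_left hminsum hk'
      have h₂ := mul_le_mul_of_nonneg_left hle (by positivity : (0 : ℝ) ≤ (S.erase m).card + 1)
      linarith

/-- Pruning an approximately-cardinality-feasible allocation: if a finite job set `S` with
positive capacities has `|S| ≤ (1+ε₂)·f` and total capacity at least `(1−ε₁)·D`, then some
subset `S' ⊆ S` with `|S'| ≤ f` has total capacity at least `(1 − 2ε₁ − ε₂)·D`. -/
theorem prune_to_cardinality {α : Type*} [DecidableEq α] (S : Finset α)
    (c : α → ℝ) (hc : ∀ j ∈ S, 0 < c j)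
    (D : ℝ) (hD : 0 < D) (f : ℕ) (hf : 0 < f)
    (ε₁ ε₂ : ℝ) (hε₁ : 0 ≤ ε₁) (hε₂ : 0 ≤ ε₂)
    (hcard : (S.card : ℝ) ≤ (1 + ε₂) * f)
    (hcap : (1 - ε₁) * D ≤ ∑ j ∈ S, c j) :
    ∃ S' ⊆ S, S'.card ≤ f ∧ (1 - 2 * ε₁ - ε₂) * D ≤ ∑ j ∈ S', c j := by
  rcases le_or_gt S.card f with h | h
  · refine ⟨S, Subset.rfl, h, le_trans ?_ hcap⟩
    exact mul_le_mul_of_nonneg_right (by linarith) hD.le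
  · obtain ⟨T, hTS, hT, hle⟩ := exists_subset_card_eq_mul_sum_le c hf S h.le
    refine ⟨T, hTS, hT.le, ?_⟩
    have hT0 : 0 ≤ ∑ j ∈ T, c j := sum_nonneg fun j hj => (hc j (hTS hj)).le
    have hf' : (0 : ℝ) < f := by exact_mod_cast hf
    have hsum : ∑ j ∈ S, c j ≤ (1 + ε₂) * ∑ j ∈ T, c j := by
      refine le_of_mul_le_mul_left ?_ hf'
      have := mul_le_mul_of_nonneg_right hcard hT0
      linarith
    refine le_of_mul_le_mul_left ((?_ : _ ≤ (1 - ε₁) * D).trans (hcap.trans hsum))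
      (by positivity)
    have : 0 ≤ (ε₁ + 2 * ε₁ * ε₂ + ε₂ ^ 2) * D := by positivity
    linarith
end

section
/- Let there be m machines with demands D_1,…,D_m > 0 and cardinality bounds f_1,…,f_m ∈ ℕ_{>0}, and n job types with capacities c_1,…,c_n > 0 and supplies s_1,…,s_n ∈ ℕ. Say job type j is allowed for machine i if c_j ≥ D_i/(2 f_i). Then: (a) if there exist nonnegative integers n_{ij} with Σ_i n_{ij} ≤ s_j for all j, Σ_j n_{ij} ≤ f_i for all i, and Σ_j n_{ij} c_j ≥ D_i for all i, then there exist nonnegative integers n'_{ij} with Σ_i n'_{ij} ≤ s_j for all j, Σ_j n'_{ij} ≤ f_i for all i, n'_{ij} > 0 only if j is allowed for i, and Σ_j n'_{ij} c_j ≥ D_i/2 for all i; (b) conversely, for any ρ ≥ 1, if there exist nonnegative integers n_{ij} with Σ_i n_{ij} ≤ s_j for all j, n_{ij} > 0 only if j is allowed for i, and Σ_j n_{ij} c_j ≥ D_i/ρ for all i (with no cardinality restriction), then there exist nonnegative integers n'_{ij} with Σ_i n'_{ij} ≤ s_j for all j, Σ_j n'_{ij} ≤ f_i for all i, and Σ_j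 n'_{ij} c_j ≥ D_i/(2ρ) for all i. -/
open Finset

/-- A vector of naturals with sum at least `k` dominates one with sum exactly `k`. -/
lemma exists_le_sum_eq_of_le_sum {ι : Type*} [Fintype ι] (u : ι → ℕ) {k : ℕ}
    (hk : k ≤ ∑ j, u j) : ∃ v : ι → ℕ, v ≤ u ∧ ∑ j, v j = k := by
  classical
  induction k with
  | zero => exact ⟨0, fun j => Nat.zero_le _, by simp⟩
  | succ k ih =>
    obtain ⟨v, hvu, hv⟩ := ih (by omega)
    obtain ⟨j, -, hj⟩ := exists_lt_of_sum_lt (s := univ) (f := v) (g := u) (by omega)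
    refine ⟨v + Pi.single j 1, fun l => ?_, by simp [sum_add_distrib, hv]⟩
    rcases eq_or_ne l j with rfl | h
    · simpa using hj
    · simpa [h] using hvu l

/-- If at most `k` items have total value at least `d`, then those of value at least
`d / (2 * k)` have total value at least `d / 2`. -/
lemma half_le_sum_ite_mul {ι : Type*} [Fintype ι] (u : ι → ℕ) (c : ι → ℝ) {d : ℝ} {k : ℕ}
    (hd : 0 ≤ d) (hk : 0 < k) (hu : ∑ j, u j ≤ k) (hdu : d ≤ ∑ j, (u j : ℝ) * c j) :
    d / 2 ≤ ∑ j, ((if d / (2 * (k : ℝ)) ≤ c j then u j else 0 : ℕ) : ℝ) * c j := by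
  have hk' : (0 : ℝ) < k := by exact_mod_cast hk
  have hu' : ∑ j, (u j : ℝ) ≤ k := by exact_mod_cast hu
  have hsplit : ∑ j, (u j : ℝ) * c j ≤
      ∑ j, ((if d / (2 * (k : ℝ)) ≤ c j then u j else 0 : ℕ) : ℝ) * c j
        + (∑ j, (u j : ℝ)) * (d / (2 * k)) := by
    rw [sum_mul, ← sum_add_distrib]
    refine sum_le_sum fun j _ => ?_
    split_ifs with h
    · have : 0 ≤ (u j : ℝ) * (d / (2 * k)) := by positivity
      linarith
    · simpa using mul_le_mul_of_nonneg_left (not_le.mp h).le (Nat.cast_nonneg (u j))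
  have hsmall : (∑ j, (u j : ℝ)) * (d / (2 * k)) ≤ d / 2 :=
    calc (∑ j, (u j : ℝ)) * (d / (2 * k)) ≤ k * (d / (2 * k)) := by gcongr
      _ = d / 2 := by field_simp
  linarith

/-- Items of value at least `d / (2 * k)` and total value at least `d / ρ` contain at most `k`
items of total value at least `d / (2 * ρ)`. -/
lemma exists_le_sum_le_and_le_sum_mul {ι : Type*} [Fintype ι] (u : ι → ℕ) (c : ι → ℝ)
    {d ρ : ℝ} {k : ℕ} (hd : 0 ≤ d) (hk : 0 < k) (hρ : 1 ≤ ρ)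
    (hu : ∀ j, 0 < u j → d / (2 * (k : ℝ)) ≤ c j) (hdu : d / ρ ≤ ∑ j, (u j : ℝ) * c j) :
    ∃ v : ι → ℕ, v ≤ u ∧ ∑ j, v j ≤ k ∧ d / (2 * ρ) ≤ ∑ j, (v j : ℝ) * c j := by
  rcases le_total (∑ j, u j) k with h | h
  · refine ⟨u, le_rfl, h, le_trans ?_ hdu⟩
    gcongr
    linarith
  · obtain ⟨v, hvu, hv⟩ := exists_le_sum_eq_of_le_sum u h
    refine ⟨v, hvu, hv.le, ?_⟩
    have hk' : (0 : ℝ) < k := by exact_mod_cast hk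
    have hv' : ∑ j, (v j : ℝ) = k := by exact_mod_cast hv
    calc d / (2 * ρ) ≤ d / 2 := by gcongr; linarith
      _ = (∑ j, (v j : ℝ)) * (d / (2 * k)) := by rw [hv']; field_simp
      _ = ∑ j, (v j : ℝ) * (d / (2 * k)) := sum_mul ..
      _ ≤ ∑ j, (v j : ℝ) * c j := by
        refine sum_le_sum fun j _ => ?_
        rcases Nat.eq_zero_or_pos (v j) with h0 | h0
        · simp [h0]
        · exact mul_le_mul_of_nonneg_left (hu j (h0.trans_le (hvu j))) (Nat.cast_nonneg _)

/-- Reduction between CCKP (`Q|f_i|C_min`) and the restricted-assignment problem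
`Q|restr|C_min` in which job type `j` is allowed for machine `i` iff `c j ≥ D i / (2 f i)`.
(a) Any allocation respecting supplies and cardinality bounds and meeting the demands can be
turned into one supported on allowed pairs meeting half the demands.
(b) Conversely, for any `ρ ≥ 1`, any allocation supported on allowed pairs (with no
cardinality restriction) meeting a `1/ρ` fraction of the demands can be turned into one
also respecting the cardinality bounds and meeting a `1/(2ρ)` fraction of the demands. -/
theorem cckp_restricted_assignment_reduction (m n : ℕ)
    (D : Fin m → ℝ) (hD : ∀ i, 0 < D i)
    (f : Fin m → ℕ) (hf : ∀ i, 0 < f i)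
    (c : Fin n → ℝ) (hc : ∀ j, 0 < c j)
    (s : Fin n → ℕ) :
    ((∃ nn : Fin m → Fin n → ℕ,
        (∀ j, ∑ i, nn i j ≤ s j) ∧
        (∀ i, ∑ j, nn i j ≤ f i) ∧
        (∀ i, D i ≤ ∑ j, (nn i j : ℝ) * c j)) →
      ∃ nn' : Fin m → Fin n → ℕ,
        (∀ j, ∑ i, nn' i j ≤ s j) ∧
        (∀ i, ∑ j, nn' i j ≤ f i) ∧
        (∀ i j, 0 < nn' i j → D i / (2 * (f i : ℝ)) ≤ c j) ∧
        (∀ i, D i / 2 ≤ ∑ j, (nn' i j : ℝ) * c j)) ∧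
    (∀ ρ : ℝ, 1 ≤ ρ →
      (∃ nn : Fin m → Fin n → ℕ,
        (∀ j, ∑ i, nn i j ≤ s j) ∧
        (∀ i j, 0 < nn i j → D i / (2 * (f i : ℝ)) ≤ c j) ∧
        (∀ i, D i / ρ ≤ ∑ j, (nn i j : ℝ) * c j)) →
      ∃ nn' : Fin m → Fin n → ℕ,
        (∀ j, ∑ i, nn' i j ≤ s j) ∧
        (∀ i, ∑ j, nn' i j ≤ f i) ∧
        (∀ i, D i / (2 * ρ) ≤ ∑ j, (nn' i j : ℝ) * c j)) := by
  constructor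
  · rintro ⟨nn, hs, hcard, hdem⟩
    have hle : ∀ i j, (if D i / (2 * (f i : ℝ)) ≤ c j then nn i j else 0) ≤ nn i j := by
      intro i j
      split_ifs <;> simp
    refine ⟨fun i j => if D i / (2 * (f i : ℝ)) ≤ c j then nn i j else 0,
      fun j => (sum_le_sum fun i _ => hle i j).trans (hs j),
      fun i => (sum_le_sum fun j _ => hle i j).trans (hcard i),
      fun i j hpos => ?_,
      fun i => half_le_sum_ite_mul (nn i) c (hD i).le (hf i) (hcard i) (hdem i)⟩
    by_contra h
    simp [h] at hpos
  · rintro ρ hρ ⟨nn, hs, hallowed, hdem⟩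
    choose v hvle hvcard hvdem using fun i =>
      exists_le_sum_le_and_le_sum_mul (nn i) c (hD i).le (hf i) hρ (hallowed i) (hdem i)
    exact ⟨v, fun j => (sum_le_sum fun i _ => hvle i j).trans (hs j), hvcard, hvdem⟩
end
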